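/- For any locally compact metric space X and any prime p, the following Bockstein inequalities hold: (1) dim_{Z(p^∞)} X ≤ dim_{Z/pZ} X; (2) dim_{Z/pZ} X ≤ dim_{Z(p^∞)} X + 1; (3) dim_Q X ≤ dim_{Z_(p)} X; (4) dim_{Z/pZ} X ≤ dim_{Z_(p)} X; (5) dim_{Z(p^∞)} X ≤ max{ dim_Q X, dim_{Z_(p)} X − 1 }; (6) dim_{Z_(p)} X ≤ max{ dim_Q X, dim_{Z(p^∞)} X + 1 }. -/

import Mathlib

open Set Function

open scoped ENNReal

noncomputable section

/-! ### Alexander–Spanier (Čech) cohomology -/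

namespace AS

variable (A : Type*) [AddCommGroup A]

/-- Alexander–Spanier `n`-cochains on `X` with coefficients in `A`. -/
abbrev Cochain (X : Type*) (n : ℕ) : Type _ := (Fin (n + 1) → X) → A

/-- The Alexander–Spanier coboundary operator. -/
def d (X : Type*) (n : ℕ) : Cochain A X n →+ Cochain A X (n + 1) :=
  AddMonoidHom.mk' (fun φ s => ∑ i : Fin (n + 2), ((-1 : ℤ) ^ (i : ℕ)) • φ (s ∘ i.succAbove))
    (fun φ ψ => funext fun s => by
      simp [smul_add, Finset.sum_add_distrib])

/-- An open cover of `X`. -/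
def IsOpenCover {X : Type*} [TopologicalSpace X] (U : Set (Set X)) : Prop :=
  (∀ u ∈ U, IsOpen u) ∧ ⋃₀ U = univ

/-- A tuple is `U`-small if it is contained in a single member of `U`. -/
def Small {X : Type*} (U : Set (Set X)) {k : ℕ} (s : Fin k → X) : Prop :=
  ∃ u ∈ U, ∀ i, s i ∈ u

/-- The subgroup of cochains vanishing on all tuples that are small with respect to
some open cover (i.e. vanishing in a neighbourhood of the diagonal). -/
def locZero (X : Type*) [TopologicalSpace X] (n : ℕ) : AddSubgroup (Cochain A X n) where
  carrier := {φ | ∃ U, IsOpenCover U ∧ ∀ s : Fin (n + 1) → X, Small U s → φ s = 0}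
  zero_mem' := ⟨{univ}, ⟨fun u hu => by rw [mem_singleton_iff] at hu; rw [hu]; exact isOpen_univ,
      by simp⟩, fun s _ => rfl⟩
  add_mem' := by
    rintro φ ψ ⟨U, ⟨hUo, hUc⟩, hφ⟩ ⟨W, ⟨hWo, hWc⟩, hψ⟩
    refine ⟨(fun p : Set X × Set X => p.1 ∩ p.2) '' (U ×ˢ W), ⟨?_, ?_⟩, ?_⟩
    · rintro _ ⟨⟨u, w⟩, ⟨hu, hw⟩, rfl⟩
      exact (hUo u hu).inter (hWo w hw)
    · apply eq_univ_of_forall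
      intro x
      have hx1 : x ∈ ⋃₀ U := hUc ▸ mem_univ x
      have hx2 : x ∈ ⋃₀ W := hWc ▸ mem_univ x
      obtain ⟨u, hu, hxu⟩ := hx1
      obtain ⟨w, hw, hxw⟩ := hx2
      exact ⟨u ∩ w, ⟨⟨u, w⟩, ⟨hu, hw⟩, rfl⟩, hxu, hxw⟩
    · rintro s ⟨_, ⟨⟨u, w⟩, ⟨hu, hw⟩, rfl⟩, hs⟩
      have h1 : φ s = 0 := hφ s ⟨u, hu, fun i => (hs i).1⟩
      have h2 : ψ s = 0 := hψ s ⟨w, hw, fun i => (hs i).2⟩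
      show φ s + ψ s = 0
      rw [h1, h2, add_zero]
  neg_mem' := by
    rintro φ ⟨U, hU, hφ⟩
    exact ⟨U, hU, fun s hs => by show -φ s = 0; rw [hφ s hs, neg_zero]⟩

/-- The Alexander–Spanier cochain complex: cochains modulo locally zero cochains. -/
abbrev QC (X : Type*) [TopologicalSpace X] (n : ℕ) : Type _ := Cochain A X n ⧸ locZero A X n

lemma d_locZero (X : Type*) [TopologicalSpace X] (n : ℕ) :
    locZero A X n ≤ (locZero A X (n + 1)).comap (d A X n) := by
  rintro φ ⟨U, hU, hφ⟩
  refine ⟨U, hU, fun s ⟨u, hu, hs⟩ => ?_⟩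
  show (d A X n φ) s = 0
  have : ∀ i : Fin (n + 2), φ (s ∘ i.succAbove) = 0 :=
    fun i => hφ _ ⟨u, hu, fun j => hs _⟩
  simp only [d, AddMonoidHom.mk'_apply]
  exact Finset.sum_eq_zero fun i _ => by rw [this i, smul_zero]

/-- The induced differential on the Alexander–Spanier complex. -/
def dQ (X : Type*) [TopologicalSpace X] (n : ℕ) : QC A X n →+ QC A X (n + 1) :=
  QuotientAddGroup.map _ _ (d A X n) (d_locZero A X n)

/-- Cocycles. -/
def cocycles (X : Type*) [TopologicalSpace X] (n : ℕ) : AddSubgroup (QC A X n) :=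
  (dQ A X n).ker

/-- Coboundaries (the trivial subgroup in degree `0`). -/
def cobounds (X : Type*) [TopologicalSpace X] (n : ℕ) : AddSubgroup (QC A X n) :=
  match n with
  | 0 => ⊥
  | (m + 1) => (dQ A X m).range

/-- Alexander–Spanier cohomology of `X` with coefficients in `A`; for paracompact Hausdorff
(e.g. metric) spaces this is naturally isomorphic to Čech cohomology. -/
def ASH (n : ℕ) (X : Type*) [TopologicalSpace X] : Type _ :=
  ↥(cocycles A X n) ⧸ ((cobounds A X n).comap (cocycles A X n).subtype)

instance (n : ℕ) (X : Type*) [TopologicalSpace X] : AddCommGroup (ASH A n X) :=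
  inferInstanceAs (AddCommGroup
    (↥(cocycles A X n) ⧸ ((cobounds A X n).comap (cocycles A X n).subtype)))

end AS

namespace AS

variable (A : Type*) [AddCommGroup A]

/-- Pullback of Alexander–Spanier cochains along a map. -/
def pull {X Y : Type*} (f : X → Y) (n : ℕ) : Cochain A Y n →+ Cochain A X n :=
  AddMonoidHom.mk' (fun φ s => φ (f ∘ s)) (fun φ ψ => rfl)

lemma pull_d {X Y : Type*} (f : X → Y) (n : ℕ) (φ : Cochain A Y n) :
    pull A f (n + 1) (d A Y n φ) = d A X n (pull A f n φ) := rfl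

lemma pull_locZero {X Y : Type*} [TopologicalSpace X] [TopologicalSpace Y] {f : X → Y}
    (hf : Continuous f) (n : ℕ) :
    locZero A Y n ≤ (locZero A X n).comap (pull A f n) := by
  rintro φ ⟨U, ⟨hUo, hUc⟩, hφ⟩
  refine ⟨(f ⁻¹' ·) '' U, ⟨?_, ?_⟩, ?_⟩
  · rintro _ ⟨u, hu, rfl⟩
    exact (hUo u hu).preimage hf
  · apply eq_univ_of_forall
    intro x
    have : f x ∈ ⋃₀ U := hUc ▸ mem_univ _
    obtain ⟨u, hu, hx⟩ := this
    exact ⟨f ⁻¹' u, ⟨u, hu, rfl⟩, hx⟩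
  · rintro s ⟨_, ⟨u, hu, rfl⟩, hs⟩
    exact hφ _ ⟨u, hu, fun i => hs i⟩

/-- Pullback on the Alexander–Spanier complex. -/
def pullQ {X Y : Type*} [TopologicalSpace X] [TopologicalSpace Y] {f : X → Y}
    (hf : Continuous f) (n : ℕ) : QC A Y n →+ QC A X n :=
  QuotientAddGroup.map _ _ (pull A f n) (pull_locZero A hf n)

lemma pullQ_d {X Y : Type*} [TopologicalSpace X] [TopologicalSpace Y] {f : X → Y}
    (hf : Continuous f) (n : ℕ) (x : QC A Y n) :
    pullQ A hf (n + 1) (dQ A Y n x) = dQ A X n (pullQ A hf n x) := by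
  refine QuotientAddGroup.induction_on x ?_
  intro φ
  simp only [pullQ, dQ, QuotientAddGroup.map_mk, pull_d]

lemma pullQ_cocycles {X Y : Type*} [TopologicalSpace X] [TopologicalSpace Y] {f : X → Y}
    (hf : Continuous f) (n : ℕ) {x : QC A Y n} (hx : x ∈ cocycles A Y n) :
    pullQ A hf n x ∈ cocycles A X n := by
  have : dQ A Y n x = 0 := hx
  show dQ A X n (pullQ A hf n x) = 0
  rw [← pullQ_d, this, map_zero]

lemma pullQ_cobounds {X Y : Type*} [TopologicalSpace X] [TopologicalSpace Y] {f : X → Y}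
    (hf : Continuous f) (n : ℕ) {x : QC A Y n} (hx : x ∈ cobounds A Y n) :
    pullQ A hf n x ∈ cobounds A X n := by
  match n with
  | 0 =>
    have : x = 0 := hx
    rw [this, map_zero]
    exact (⊥ : AddSubgroup (QC A X 0)).zero_mem
  | (m + 1) =>
    obtain ⟨y, rfl⟩ := hx
    exact ⟨pullQ A hf m y, (pullQ_d A hf m y).symm⟩

/-- The map on cocycles induced by a continuous map. -/
def pullZ {X Y : Type*} [TopologicalSpace X] [TopologicalSpace Y] {f : X → Y}
    (hf : Continuous f) (n : ℕ) : ↥(cocycles A Y n) →+ ↥(cocycles A X n) :=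
  AddMonoidHom.codRestrict ((pullQ A hf n).comp (cocycles A Y n).subtype) _
    (fun x => pullQ_cocycles A hf n x.2)

/-- The homomorphism induced on Alexander–Spanier (Čech) cohomology by a continuous map.
Note the contravariance: a map `f : X → Y` induces `ASHmap : ASH A n Y →+ ASH A n X`. -/
def ASHmap {X Y : Type*} [TopologicalSpace X] [TopologicalSpace Y] {f : X → Y}
    (hf : Continuous f) (n : ℕ) : ASH A n Y →+ ASH A n X :=
  QuotientAddGroup.map _ _ (pullZ A hf n) (by
    rintro ⟨x, hx⟩ hmem
    have : x ∈ cobounds A Y n := hmem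
    exact pullQ_cobounds A hf n this)

end AS

namespace AS

variable (A : Type*) [AddCommGroup A]

/-- Čech cohomology with compact supports: for compact `B` this is the (Alexander–Spanier =
Čech) cohomology of `B` itself, and for noncompact `B` it is that of the one-point
compactification of `B`. -/
def Hc (n : ℕ) (B : Type*) [TopologicalSpace B] : Type _ :=
  open scoped Classical in
  if CompactSpace B then ASH A n B else ASH A n (OnePoint B)

end AS

/-- The cohomological dimension `dim_A X` of a space `X` with respect to an abelian group `A`:
the supremum of the integers `n` for which there is a locally compact subset `B ⊆ X` with
`H^n_c(B; A) ≠ 0`. -/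
noncomputable def cohDim (A : Type*) [AddCommGroup A] (X : Type*) [TopologicalSpace X] : ℕ∞ :=
  sSup {e : ℕ∞ | ∃ n : ℕ, e = (n : ℕ∞) ∧
    ∃ B : Set X, LocallyCompactSpace B ∧ Nontrivial (AS.Hc A n B)}

/-- The integers localized at `p`, realized as the additive subgroup of `ℚ` consisting of
rationals whose denominator is not divisible by `p`. -/
def ZLocalAt (p : ℕ) (hp : p.Prime) : AddSubgroup ℚ where
  carrier := {q : ℚ | ¬ (p ∣ q.den)}
  zero_mem' := by
    simp only [Set.mem_setOf_eq, Rat.den_zero, Nat.dvd_one]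
    exact hp.ne_one
  add_mem' := by
    intro a b ha hb h
    rcases (hp.dvd_mul.mp (h.trans (Rat.add_den_dvd a b))) with h' | h'
    exacts [ha h', hb h']
  neg_mem' := by
    intro a ha
    simpa only [Set.mem_setOf_eq, Rat.den_neg_eq_den] using ha

/-- The Prüfer `p`-group `ℤ(p^∞)`, realized as the subgroup of `ℚ/ℤ` of elements annihilated
by a power of `p`. -/
def Prufer (p : ℕ) : AddSubgroup (ℚ ⧸ AddSubgroup.zmultiples (1 : ℚ)) where
  carrier := {x | ∃ k : ℕ, (p ^ k : ℕ) • x = 0}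
  zero_mem' := ⟨0, smul_zero _⟩
  add_mem' := by
    rintro a b ⟨k, hk⟩ ⟨l, hl⟩
    refine ⟨k + l, ?_⟩
    rw [smul_add, pow_add, mul_comm, mul_smul, hk, smul_zero, zero_add, mul_comm, mul_smul,
      hl, smul_zero]
  neg_mem' := by
    rintro a ⟨k, hk⟩
    exact ⟨k, by rw [smul_neg, hk, neg_zero]⟩

namespace AS

/-! ### The coboundary on tuples of arbitrary length and the prism operator -/

section Tuples

variable {A B X : Type*} [AddCommGroup A] [AddCommGroup B]

/-- The alternating coboundary on functions of `k`-tuples, including the augmentation `k = 0`. -/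
def tupleDelta {k : ℕ} (φ : (Fin k → X) → A) (s : Fin (k + 1) → X) : A :=
  ∑ i : Fin (k + 1), ((-1 : ℤ) ^ (i : ℕ)) • φ (s ∘ i.succAbove)

/-- Insertion of a fixed first argument. -/
def insertFirst {k : ℕ} (x : X) (φ : (Fin (k + 1) → X) → A) (t : Fin k → X) : A :=
  φ (Fin.cons x t)

lemma d_eq_tupleDelta (n : ℕ) (φ : Cochain A X n) : d A X n φ = tupleDelta φ := rfl

lemma tupleDelta_sub {k : ℕ} (φ ψ : (Fin k → X) → A) :
    tupleDelta (φ - ψ) = tupleDelta φ - tupleDelta ψ := by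
  funext s
  simp [tupleDelta, smul_sub, Finset.sum_sub_distrib]

lemma tupleDelta_zero_left (φ : (Fin 0 → X) → A) (s : Fin 1 → X) (t : Fin 0 → X) :
    tupleDelta φ s = φ t := by
  simp only [tupleDelta, Fin.sum_univ_succ, Fin.sum_univ_zero]
  simp [Subsingleton.elim (s ∘ Fin.succ) t]

lemma tupleDelta_cons {k : ℕ} (φ : (Fin (k + 1) → X) → A) (x : X) (t : Fin (k + 1) → X) :
    tupleDelta φ (Fin.cons x t) = φ t - tupleDelta (insertFirst x φ) t := by
  have h0 : (Fin.cons x t : Fin (k + 2) → X) ∘ Fin.succAbove 0 = t := by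
    funext j; simp
  have hs : ∀ i : Fin (k + 1), (Fin.cons x t : Fin (k + 2) → X) ∘ i.succ.succAbove =
      Fin.cons x (t ∘ i.succAbove) := by
    intro i
    funext j
    refine Fin.cases ?_ (fun j => ?_) j <;> simp
  rw [tupleDelta, Fin.sum_univ_succ, h0]
  simp only [hs, tupleDelta, insertFirst, Fin.val_succ, pow_succ, Fin.val_zero, pow_zero, one_smul,
    mul_neg, mul_one, neg_smul, Finset.sum_neg_distrib, sub_eq_add_neg]

lemma insertFirst_tupleDelta {k : ℕ} (φ : (Fin (k + 1) → X) → A) (x : X) :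
    insertFirst x (tupleDelta φ) = φ - tupleDelta (insertFirst x φ) :=
  funext fun t => tupleDelta_cons φ x t

lemma tupleDelta_tupleDelta : ∀ {k : ℕ} (φ : (Fin k → X) → A), tupleDelta (tupleDelta φ) = 0
  | 0, φ => by
    funext s
    rw [← Fin.cons_self_tail s, tupleDelta_cons,
      tupleDelta_zero_left φ (Fin.tail s) (Fin.tail (Fin.tail s)),
      tupleDelta_zero_left _ (Fin.tail s) (Fin.tail (Fin.tail s)), insertFirst,
      tupleDelta_zero_left φ _ (Fin.tail (Fin.tail s)), sub_self]
    rfl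
  | k + 1, φ => by
    funext s
    rw [← Fin.cons_self_tail s, tupleDelta_cons, insertFirst_tupleDelta, tupleDelta_sub,
      tupleDelta_tupleDelta (insertFirst (s 0) φ)]
    simp

/-- The prism operator between the identity and the self-map `f`. -/
def prism (f : X → X) : {k : ℕ} → ((Fin (k + 1) → X) → A) → (Fin k → X) → A
  | 0, _, _ => 0
  | _ + 1, φ, s => φ (Fin.cons (s 0) (f ∘ s)) - prism f (insertFirst (s 0) φ) (Fin.tail s)

lemma prism_sub (f : X → X) : ∀ {k : ℕ} (φ ψ : (Fin (k + 1) → X) → A),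
    prism f (φ - ψ) = prism f φ - prism f ψ
  | 0, _, _ => by funext s; simp [prism]
  | k + 1, φ, ψ => by
    funext s
    have h : insertFirst (s 0) (φ - ψ) = insertFirst (s 0) φ - insertFirst (s 0) ψ := rfl
    simp only [prism, h, prism_sub f (insertFirst (s 0) φ), Pi.sub_apply]
    abel

lemma prism_cons (f : X → X) {k : ℕ} (φ : (Fin (k + 2) → X) → A) (x : X) (t : Fin k → X) :
    prism f φ (Fin.cons x t) =
      φ (Fin.cons x (Fin.cons (f x) (f ∘ t))) - prism f (insertFirst x φ) t := by
  have h : f ∘ (Fin.cons x t : Fin (k + 1) → X) = Fin.cons (f x) (f ∘ t) := by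
    funext j
    refine Fin.cases ?_ (fun j => ?_) j <;> simp
  simp [prism, h]

lemma insertFirst_prism (f : X → X) {k : ℕ} (φ : (Fin (k + 2) → X) → A) (x : X) :
    insertFirst x (prism f φ) =
      (fun t => insertFirst (f x) (insertFirst x φ) (f ∘ t)) - prism f (insertFirst x φ) :=
  funext fun t => prism_cons f φ x t

lemma tupleDelta_comp (f : X → X) {k : ℕ} (φ : (Fin k → X) → A) (s : Fin (k + 1) → X) :
    tupleDelta (fun t => φ (f ∘ t)) s = tupleDelta φ (f ∘ s) := rfl

/-- The prism operator is a chain homotopy between the identity and pullback along `f`. -/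
lemma prism_homotopy (f : X → X) : ∀ {k : ℕ} (φ : (Fin (k + 1) → X) → A) (s : Fin (k + 1) → X),
    tupleDelta (prism f φ) s + prism f (tupleDelta φ) s = φ (f ∘ s) - φ s
  | 0, φ, s => by
    have hs : s = Fin.cons (s 0) (Fin.tail s) := (Fin.cons_self_tail s).symm
    have h1 : tupleDelta (prism f φ) s = 0 :=
      tupleDelta_zero_left _ s (Fin.tail s)
    have h2 : (Fin.cons (s 0) (Fin.tail (f ∘ s)) : Fin 1 → X) = s := by
      funext j; fin_cases j; rfl
    rw [h1, zero_add, prism, prism, tupleDelta_cons,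
      tupleDelta_zero_left _ (f ∘ s) (Fin.tail (f ∘ s)), insertFirst, h2, sub_zero]
  | k + 1, φ, s => by
    obtain ⟨x, t, rfl⟩ : ∃ x t, s = Fin.cons x t := ⟨_, _, (Fin.cons_self_tail s).symm⟩
    have hf : f ∘ (Fin.cons x t : Fin (k + 2) → X) = Fin.cons (f x) (f ∘ t) := by
      funext j
      refine Fin.cases ?_ (fun j => ?_) j <;> simp
    have ih := prism_homotopy f (insertFirst x φ) t
    rw [tupleDelta_cons, insertFirst_prism, tupleDelta_sub, prism_cons, insertFirst_tupleDelta,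
      prism_sub, tupleDelta_cons, tupleDelta_cons, hf]
    simp only [Pi.sub_apply, tupleDelta_comp]
    have h1 : insertFirst x φ (f ∘ t) = φ (Fin.cons x (f ∘ t)) := rfl
    have h2 : insertFirst x φ t = φ (Fin.cons x t) := rfl
    rw [h2] at ih
    rw [eq_sub_iff_add_eq, ← sub_eq_zero] at ih ⊢
    rw [← ih]
    abel

lemma prism_eq_zero (f : X → X) (S : Set X) :
    ∀ {k : ℕ} (ψ : (Fin (k + 1) → X) → A) (s : Fin k → X),
    (∀ i, s i ∈ S) → (∀ i, f (s i) ∈ S) → (∀ t, (∀ i, t i ∈ S) → ψ t = 0) → prism f ψ s = 0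
  | 0, _, _, _, _, _ => rfl
  | k + 1, ψ, s, hs, hfs, hψ => by
    have cons_mem : ∀ {m : ℕ} (t : Fin m → X), (∀ i, t i ∈ S) →
        ∀ i, (Fin.cons (s 0) t : Fin (m + 1) → X) i ∈ S := by
      intro m t ht i
      refine Fin.cases ?_ (fun j => ?_) i
      · simpa using hs 0
      · simpa using ht j
    rw [prism, hψ _ (cons_mem (f ∘ s) hfs),
      prism_eq_zero f S (insertFirst (s 0) ψ) (Fin.tail s) (fun i => hs i.succ)
      (fun i => hfs i.succ) (fun t ht => hψ _ (cons_mem t ht)), sub_zero]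

lemma d_d (n : ℕ) (φ : Cochain A X n) : d A X (n + 1) (d A X n φ) = 0 :=
  tupleDelta_tupleDelta φ

/-- Postcomposition of cochains with a homomorphism of coefficient groups. -/
def push (g : A →+ B) {n : ℕ} (φ : Cochain A X n) : Cochain B X n := fun s => g (φ s)

lemma push_sub (g : A →+ B) {n : ℕ} (φ ψ : Cochain A X n) :
    push g (φ - ψ) = push g φ - push g ψ := funext fun _ => map_sub g _ _

lemma push_d (g : A →+ B) {n : ℕ} (φ : Cochain A X n) :
    push g (d A X n φ) = d B X n (push g φ) := by
  funext s
  simp [push, d_eq_tupleDelta, tupleDelta, map_sum, map_zsmul]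

lemma exists_push_eq {g : A →+ B} (hg : Surjective g) {n : ℕ} (ψ : Cochain B X n) :
    ∃ φ : Cochain A X n, push g φ = ψ := by
  choose r hr using hg
  exact ⟨fun s => r (ψ s), funext fun s => hr _⟩

end Tuples

/-! ### Cocycles and coboundaries at the level of cochains -/

section Cochains

variable {A B C X : Type*} [AddCommGroup A] [AddCommGroup B] [AddCommGroup C] [TopologicalSpace X]

/-- A cochain representing a cocycle of the Alexander–Spanier complex. -/
def IsCo {n : ℕ} (φ : Cochain A X n) : Prop := d A X n φ ∈ locZero A X (n + 1)

/-- A cochain representing a coboundary of the Alexander–Spanier complex. -/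
def IsBd {n : ℕ} (φ : Cochain A X n) : Prop := (φ : QC A X n) ∈ cobounds A X n

lemma isBd_zero_iff {φ : Cochain A X 0} : IsBd φ ↔ φ ∈ locZero A X 0 := by
  rw [← QuotientAddGroup.eq_zero_iff]
  exact Iff.rfl

lemma isBd_succ_iff {n : ℕ} {φ : Cochain A X (n + 1)} :
    IsBd φ ↔ ∃ χ : Cochain A X n, φ - d A X n χ ∈ locZero A X (n + 1) := by
  constructor
  · rintro ⟨y, hy⟩
    obtain ⟨χ, rfl⟩ := QuotientAddGroup.mk_surjective y
    refine ⟨χ, ?_⟩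
    rw [← QuotientAddGroup.eq_zero_iff, QuotientAddGroup.mk_sub, ← hy, sub_eq_zero]
    rfl
  · rintro ⟨χ, h⟩
    refine ⟨(χ : QC A X n), ?_⟩
    rw [← QuotientAddGroup.eq_zero_iff, QuotientAddGroup.mk_sub, sub_eq_zero] at h
    exact h.symm

lemma IsBd.add {n : ℕ} {φ ψ : Cochain A X n} (hφ : IsBd φ) (hψ : IsBd ψ) : IsBd (φ + ψ) :=
  (cobounds A X n).add_mem hφ hψ

lemma isBd_of_mem_locZero {n : ℕ} {φ : Cochain A X n} (h : φ ∈ locZero A X n) : IsBd φ := by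
  have : (φ : QC A X n) = 0 := (QuotientAddGroup.eq_zero_iff φ).2 h
  rw [IsBd, this]
  exact zero_mem _

lemma isBd_d {n : ℕ} (χ : Cochain A X n) : IsBd (d A X n χ) :=
  isBd_succ_iff.2 ⟨χ, by rw [sub_self]; exact zero_mem _⟩

lemma IsBd.isCo : ∀ {n : ℕ} {φ : Cochain A X n}, IsBd φ → IsCo φ
  | 0, _, h => d_locZero A X 0 (isBd_zero_iff.1 h)
  | n + 1, φ, h => by
    obtain ⟨χ, hχ⟩ := isBd_succ_iff.1 h
    have := d_locZero A X _ hχ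
    rwa [AddSubgroup.mem_comap, map_sub, d_d, sub_zero] at this

variable (A X) in
/-- Every degree `n` cocycle is a coboundary. -/
def Vanish (n : ℕ) : Prop := ∀ φ : Cochain A X n, IsCo φ → IsBd φ

lemma nontrivial_ASH_iff {n : ℕ} : Nontrivial (ASH A n X) ↔ ¬ Vanish A X n := by
  rw [← not_subsingleton_iff_nontrivial, not_iff_not]
  have key : Subsingleton (ASH A n X) ↔
      (cobounds A X n).comap (cocycles A X n).subtype = ⊤ :=
    QuotientAddGroup.subsingleton_iff
  rw [key, AddSubgroup.eq_top_iff']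
  have hco : ∀ φ : Cochain A X n, (φ : QC A X n) ∈ cocycles A X n ↔ IsCo φ :=
    fun φ => QuotientAddGroup.eq_zero_iff _
  constructor
  · intro h φ hφ
    exact h ⟨φ, (hco φ).2 hφ⟩
  · rintro h ⟨x, hx⟩
    obtain ⟨φ, rfl⟩ := QuotientAddGroup.mk_surjective x
    exact h φ ((hco φ).1 hx)

/-! ### Change of coefficients -/

lemma push_locZero (g : A →+ B) {n : ℕ} {φ : Cochain A X n} (h : φ ∈ locZero A X n) :
    push g φ ∈ locZero B X n := by
  obtain ⟨U, hU, h⟩ := h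
  exact ⟨U, hU, fun s hs => by rw [push, h s hs, map_zero]⟩

lemma mem_locZero_of_push {g : A →+ B} (hg : Injective g) {n : ℕ} {φ : Cochain A X n}
    (h : push g φ ∈ locZero B X n) : φ ∈ locZero A X n := by
  obtain ⟨U, hU, h⟩ := h
  exact ⟨U, hU, fun s hs => hg (by rw [map_zero]; exact h s hs)⟩

lemma IsCo.push (g : A →+ B) {n : ℕ} {φ : Cochain A X n} (h : IsCo φ) : IsCo (push g φ) := by
  rw [IsCo, ← push_d]
  exact push_locZero g h

lemma IsBd.push (g : A →+ B) : ∀ {n : ℕ} {φ : Cochain A X n}, IsBd φ → IsBd (push g φ)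
  | 0, _, h => isBd_zero_iff.2 (push_locZero g (isBd_zero_iff.1 h))
  | n + 1, φ, h => by
    obtain ⟨χ, hχ⟩ := isBd_succ_iff.1 h
    refine isBd_succ_iff.2 ⟨AS.push g χ, ?_⟩
    rw [← push_d, ← push_sub]
    exact push_locZero g hχ

lemma IsCo.of_push {g : A →+ B} (hg : Injective g) {n : ℕ} {φ : Cochain A X n}
    (h : IsCo (AS.push g φ)) : IsCo φ := by
  rw [IsCo, ← push_d] at h
  exact mem_locZero_of_push hg h

/-! ### Pieces of the long exact sequence -/

lemma exists_sub_push_mem_locZero {i : A →+ B} {q : B →+ C} (hex : Exact i q) {n : ℕ}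
    {φ : Cochain B X n} (h : push q φ ∈ locZero C X n) :
    ∃ α : Cochain A X n, φ - push i α ∈ locZero B X n := by
  classical
  obtain ⟨U, hU, h⟩ := h
  have hlift : ∀ s, ∃ a : A, q (φ s) = 0 → i a = φ s := fun s => by
    by_cases hs : q (φ s) = 0
    · obtain ⟨a, ha⟩ := (hex _).1 hs
      exact ⟨a, fun _ => ha⟩
    · exact ⟨0, fun h' => absurd h' hs⟩
  choose α hα using hlift
  refine ⟨α, U, hU, fun s hs => ?_⟩
  show φ s - i (α s) = 0
  rw [hα s (h s hs), sub_self]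

lemma exists_isBd_sub_push {i : A →+ B} {q : B →+ C} (hex : Exact i q) (hq : Surjective q) :
    ∀ {n : ℕ} {φ : Cochain B X n}, IsBd (push q φ) → ∃ α : Cochain A X n, IsBd (φ - push i α)
  | 0, _, h => by
    obtain ⟨α, hα⟩ := exists_sub_push_mem_locZero hex (isBd_zero_iff.1 h)
    exact ⟨α, isBd_of_mem_locZero hα⟩
  | n + 1, φ, h => by
    obtain ⟨γ, hγ⟩ := isBd_succ_iff.1 h
    obtain ⟨β, rfl⟩ := exists_push_eq hq γ
    rw [← push_d, ← push_sub] at hγ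
    obtain ⟨α, hα⟩ := exists_sub_push_mem_locZero hex hγ
    refine ⟨α, isBd_succ_iff.2 ⟨β, ?_⟩⟩
    rwa [sub_right_comm]

lemma Vanish.isBd_of_push {i : A →+ B} {q : B →+ C} (hi : Injective i) (hex : Exact i q)
    (hq : Surjective q) {n : ℕ} (hA : Vanish A X n) {φ : Cochain B X n} (hφ : IsCo φ)
    (h : IsBd (push q φ)) : IsBd φ := by
  obtain ⟨α, hα⟩ := exists_isBd_sub_push hex hq h
  have hco : IsCo (push i α) := by
    have := sub_mem hφ hα.isCo
    rwa [← map_sub, sub_sub_cancel] at this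
  have := hα.add ((hA α (hco.of_push hi)).push i)
  rwa [sub_add_cancel] at this

lemma Vanish.right {i : A →+ B} {q : B →+ C} (hi : Injective i) (hex : Exact i q)
    (hq : Surjective q) {n : ℕ} (hB : Vanish B X n) (hA : Vanish A X (n + 1)) :
    Vanish C X n := by
  intro γ hγ
  obtain ⟨β, rfl⟩ := exists_push_eq hq γ
  rw [IsCo, ← push_d] at hγ
  obtain ⟨α, hα⟩ := exists_sub_push_mem_locZero hex hγ
  have hco : IsCo (push i α) := by
    have := sub_mem (isBd_d β).isCo (d_locZero B X _ hα)
    rwa [← map_sub, sub_sub_cancel] at this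
  obtain ⟨α', hα'⟩ := isBd_succ_iff.1 (hA α (hco.of_push hi))
  have hβ : IsCo (β - push i α') := by
    have := add_mem hα (push_locZero i hα')
    rwa [push_sub, push_d, sub_add_sub_cancel, ← map_sub] at this
  have := (hB _ hβ).push q
  have hz : push q (push i α') = 0 := funext fun s => hex.apply_apply_eq_zero _
  rwa [push_sub, hz, sub_zero] at this

lemma Vanish.left {i : A →+ B} {q : B →+ C} (hi : Injective i) (hex : Exact i q)
    (hq : Surjective q) {n : ℕ} (hC : Vanish C X n) (hB : Vanish B X (n + 1)) :
    Vanish A X (n + 1) := by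
  intro α hα
  obtain ⟨β, hβ⟩ := isBd_succ_iff.1 (hB _ (hα.push i))
  have hz : push q (push i α) = 0 := funext fun s => hex.apply_apply_eq_zero _
  have hco : IsCo (push q β) := by
    have := neg_mem (push_locZero q hβ)
    rwa [push_sub, hz, zero_sub, neg_neg, push_d] at this
  obtain ⟨α', hα'⟩ := exists_isBd_sub_push hex hq (hC _ hco)
  refine isBd_succ_iff.2 ⟨α', mem_locZero_of_push hi ?_⟩
  have := add_mem hβ hα'.isCo
  rwa [map_sub, sub_add_sub_cancel, ← push_d, ← push_sub] at this

end Cochains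

/-! ### Torsion coefficients on compact spaces -/

open scoped Uniformity Topology in
/-- On a compact Hausdorff space every open cover admits a finite-valued self-map `f` that moves
points so little that small tuples together with their images are small in the cover. -/
lemma exists_finite_range_small {K : Type*} [TopologicalSpace K] [CompactSpace K] [T2Space K]
    {U : Set (Set K)} (hU : IsOpenCover U) :
    ∃ (f : K → K) (W : Set (Set K)), (range f).Finite ∧ IsOpenCover W ∧
      ∀ w ∈ W, ∃ u ∈ U, w ⊆ u ∧ MapsTo f w u := by
  let _ : UniformSpace K := uniformSpaceOfCompactR1
  obtain ⟨V, hV, hVU⟩ := lebesgue_number_lemma_sUnion (isCompact_univ (X := K)) hU.1 hU.2.ge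
  obtain ⟨E, hE, hEsymm, hEV⟩ := comp_symm_mem_uniformity_sets hV
  have hcover : ∀ x : K, interior (UniformSpace.ball x E) ∈ 𝓝 x := fun x =>
    interior_mem_nhds.2 (UniformSpace.ball_mem_nhds x hE)
  obtain ⟨T, -, hT⟩ := isCompact_univ.elim_nhds_subcover
    (fun x => interior (UniformSpace.ball x E)) (fun x _ => hcover x)
  have hf : ∀ x : K, ∃ t ∈ T, (t, x) ∈ E := fun x => by
    obtain ⟨t, ht, hx⟩ := mem_iUnion₂.1 (hT (mem_univ x))
    exact ⟨t, ht, interior_subset (s := UniformSpace.ball t E) hx⟩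
  choose f hfT hfE using hf
  refine ⟨f, range fun x => interior (UniformSpace.ball x E),
    T.finite_toSet.subset (range_subset_iff.2 hfT), ⟨?_, ?_⟩, ?_⟩
  · rintro _ ⟨x, rfl⟩
    exact isOpen_interior
  · exact eq_univ_of_forall fun x => ⟨_, ⟨x, rfl⟩, mem_of_mem_nhds (hcover x)⟩
  · rintro _ ⟨x, rfl⟩
    obtain ⟨u, hu, hxu⟩ := hVU x (mem_univ x)
    have hyE : ∀ y ∈ interior (UniformSpace.ball x E), (x, y) ∈ E := fun y hy =>
      interior_subset (s := UniformSpace.ball x E) hy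
    refine ⟨u, hu, fun y hy => hxu ?_, fun y hy => hxu ?_⟩
    · exact hEV ⟨y, hyE y hy, refl_mem_uniformity hE⟩
    · exact hEV ⟨y, hyE y hy, hEsymm.symm _ _ (hfE y)⟩

lemma exists_smul_isBd {A K : Type*} [AddCommGroup A] [TopologicalSpace K] [CompactSpace K]
    [T2Space K] {p : ℕ} (hA : ∀ a : A, ∃ k : ℕ, p ^ k • a = 0) {n : ℕ} {φ : Cochain A K n}
    (hφ : IsCo φ) : ∃ k : ℕ, IsBd (p ^ k • φ) := by
  obtain ⟨U, hU, hφU⟩ := hφ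
  obtain ⟨f, W, hf, hW, hWU⟩ := exists_finite_range_small hU
  have hfin : (range fun s : Fin (n + 1) → K => φ (f ∘ s)).Finite := by
    refine ((Set.Finite.pi' fun _ : Fin (n + 1) => hf).image φ).subset ?_
    rintro _ ⟨s, rfl⟩
    exact ⟨f ∘ s, fun i => mem_range_self _, rfl⟩
  obtain ⟨k, hk⟩ : ∃ k : ℕ, ∀ s : Fin (n + 1) → K, p ^ k • φ (f ∘ s) = 0 := by
    choose e he using hA
    obtain ⟨k, hk⟩ := (hfin.image e).bddAbove
    refine ⟨k, fun s => ?_⟩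
    obtain ⟨l, hl⟩ := Nat.exists_eq_add_of_le
      (hk (mem_image_of_mem e (mem_range_self (f := fun s => φ (f ∘ s)) s)))
    rw [hl, add_comm, pow_add, mul_smul, he, smul_zero]
  have hloc : prism f (tupleDelta φ) ∈ locZero A K n := by
    refine ⟨W, hW, ?_⟩
    rintro s ⟨w, hw, hs⟩
    obtain ⟨u, hu, hwu, hfw⟩ := hWU w hw
    exact prism_eq_zero f u _ s (fun i => hwu (hs i)) (fun i => hfw (hs i))
      fun t ht => hφU t ⟨u, hu, ht⟩
  have hbd : IsBd (tupleDelta (k := n) (prism f φ) + prism f (tupleDelta φ) : Cochain A K n) := by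
    refine IsBd.add ?_ (isBd_of_mem_locZero hloc)
    match n, φ with
    | 0, φ =>
      refine isBd_of_mem_locZero ?_
      convert zero_mem (locZero A K 0)
      exact funext fun s => tupleDelta_zero_left _ s (Fin.tail s)
    | n + 1, φ => exact isBd_d (prism f φ)
  refine ⟨k, ?_⟩
  have heq : p ^ k • φ = -(p ^ k • (tupleDelta (k := n) (prism f φ) + prism f (tupleDelta φ) :
      Cochain A K n)) := by
    funext s
    simp only [Pi.smul_apply, Pi.neg_apply, Pi.add_apply, prism_homotopy, smul_sub, hk]
    simp
  rw [heq]
  exact (cobounds A K n).neg_mem ((cobounds A K n).nsmul_mem hbd _)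

/-- The cohomology with compact supports of a locally compact Hausdorff space is the cohomology
of a compact Hausdorff space. -/
lemma exists_compact_model (B : Type) [TopologicalSpace B] [LocallyCompactSpace B] [T2Space B] :
    ∃ (K : Type) (_ : TopologicalSpace K) (_ : CompactSpace K) (_ : T2Space K),
      ∀ (A : Type) [AddCommGroup A] (n : ℕ), Nontrivial (Hc A n B) ↔ ¬ Vanish A K n := by
  by_cases h : CompactSpace B
  · refine ⟨B, inferInstance, h, inferInstance, fun A _ n => ?_⟩
    rw [← nontrivial_ASH_iff, Hc, if_pos h]
  · refine ⟨OnePoint B, inferInstance, inferInstance, inferInstance, fun A _ n => ?_⟩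
    rw [← nontrivial_ASH_iff, Hc, if_neg h]

end AS

/-! ### Coefficient sequences -/

section Coefficients

variable (p : ℕ)

lemma Prufer.mk_mem_iff {r : ℚ} :
    (r : ℚ ⧸ AddSubgroup.zmultiples (1 : ℚ)) ∈ Prufer p ↔ ∃ k : ℕ, ∃ m : ℤ, p ^ k * r = m := by
  refine exists_congr fun k => ?_
  rw [← QuotientAddGroup.mk_nsmul, QuotientAddGroup.eq_zero_iff, AddSubgroup.mem_zmultiples_iff]
  refine exists_congr fun m => ?_
  simp [eq_comm]

lemma Prufer.exists_smul_eq_zero (a : Prufer p) : ∃ k : ℕ, p ^ k • a = 0 := by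
  obtain ⟨k, hk⟩ := a.2
  exact ⟨k, Subtype.ext hk⟩

variable {p}

lemma Prufer.exists_rep (a : Prufer p) : ∃ r : ℚ, ∃ h, a = ⟨(r : ℚ ⧸ _), h⟩ := by
  obtain ⟨x, hx⟩ := a
  obtain ⟨r, rfl⟩ := QuotientAddGroup.mk_surjective x
  exact ⟨r, hx, rfl⟩

/-- Multiplication by `n` as an additive endomorphism. -/
abbrev mulBy (A : Type*) [AddCommGroup A] (n : ℕ) : A →+ A := nsmulAddMonoidHom n

lemma Prufer.mulBy_surjective (hp : p.Prime) : Surjective (mulBy (Prufer p) p) := by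
  intro a
  obtain ⟨r, hr, rfl⟩ := Prufer.exists_rep a
  have hp0 : (p : ℚ) ≠ 0 := by exact_mod_cast hp.ne_zero
  obtain ⟨k, m, hm⟩ := (Prufer.mk_mem_iff p).1 hr
  refine ⟨⟨((r / p : ℚ) : ℚ ⧸ _), (Prufer.mk_mem_iff p).2 ⟨k + 1, m, ?_⟩⟩, Subtype.ext ?_⟩
  · rw [← hm, pow_succ, mul_assoc, mul_div_cancel₀ _ hp0]
  · show p • ((r / p : ℚ) : ℚ ⧸ AddSubgroup.zmultiples (1 : ℚ)) = _
    rw [← QuotientAddGroup.mk_nsmul, nsmul_eq_mul, mul_div_cancel₀ _ hp0]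

/-- The inclusion `ℤ/p → ℤ(p^∞)`, `1 ↦ 1/p`. -/
lemma exists_zmod_to_prufer (hp : p.Prime) :
    ∃ i : ZMod p →+ Prufer p, Injective i ∧ Exact i (mulBy (Prufer p) p) := by
  have hp0 : (p : ℚ) ≠ 0 := by exact_mod_cast hp.ne_zero
  have hmem : (((1 / p : ℚ)) : ℚ ⧸ AddSubgroup.zmultiples (1 : ℚ)) ∈ Prufer p :=
    (Prufer.mk_mem_iff p).2 ⟨1, 1, by field_simp; simp⟩
  let g : ℤ →+ Prufer p := zmultiplesHom _ ⟨_, hmem⟩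
  have hg : ∀ m : ℤ, ((g m : Prufer p) : ℚ ⧸ AddSubgroup.zmultiples (1 : ℚ)) =
      ((m / p : ℚ) : ℚ ⧸ _) := fun m => by
    show m • (((1 / p : ℚ)) : ℚ ⧸ AddSubgroup.zmultiples (1 : ℚ)) = _
    rw [← QuotientAddGroup.mk_zsmul, zsmul_eq_mul, mul_one_div]
  have hg0 : ∀ m : ℤ, g m = 0 ↔ (p : ℤ) ∣ m := fun m => by
    rw [← ZeroMemClass.coe_eq_zero, hg, QuotientAddGroup.eq_zero_iff,
      AddSubgroup.mem_zmultiples_iff]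
    refine exists_congr fun c => ?_
    rw [zsmul_eq_mul, mul_one, eq_div_iff hp0, eq_comm, mul_comm]
    norm_cast
  refine ⟨ZMod.lift p ⟨g, (hg0 p).2 dvd_rfl⟩, ?_, ?_⟩
  · rw [injective_iff_map_eq_zero]
    intro a ha
    obtain ⟨m, rfl⟩ := ZMod.intCast_surjective a
    rw [ZMod.lift_coe] at ha
    exact (ZMod.intCast_zmod_eq_zero_iff_dvd _ _).2 ((hg0 m).1 ha)
  · intro a
    constructor
    · intro ha
      obtain ⟨r, hr, rfl⟩ := Prufer.exists_rep a
      have ha' : p • (r : ℚ ⧸ AddSubgroup.zmultiples (1 : ℚ)) = 0 := congrArg Subtype.val ha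
      rw [← QuotientAddGroup.mk_nsmul, QuotientAddGroup.eq_zero_iff,
        AddSubgroup.mem_zmultiples_iff] at ha'
      obtain ⟨m, hm⟩ := ha'
      refine ⟨(m : ZMod p), Subtype.ext ?_⟩
      rw [ZMod.lift_coe]
      refine (hg m).trans ?_
      congr 1
      rw [div_eq_iff hp0]
      simpa [mul_comm] using hm
    · rintro ⟨b, rfl⟩
      rw [nsmulAddMonoidHom_apply, ← map_nsmul]
      simp

lemma ZLocalAt.mulBy_injective (hp : p.Prime) : Injective (mulBy (ZLocalAt p hp) p) := by
  rw [injective_iff_map_eq_zero]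
  intro a ha
  have : p • (a : ℚ) = 0 := congrArg Subtype.val ha
  exact Subtype.ext ((smul_eq_zero.1 this).resolve_left hp.ne_zero)

/-- The reduction `ℤ_(p) → ℤ/p`. -/
lemma exists_zlocal_to_zmod (hp : p.Prime) :
    ∃ q : ZLocalAt p hp →+ ZMod p, Surjective q ∧ Exact (mulBy (ZLocalAt p hp) p) q := by
  have := Fact.mk hp
  have hden : ∀ a : ZLocalAt p hp, ((a : ℚ).den : ZMod p) ≠ 0 := fun a h =>
    a.2 ((ZMod.natCast_eq_zero_iff _ _).1 h)
  refine ⟨AddMonoidHom.mk' (fun a => ((a : ℚ) : ZMod p))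
    fun a b => Rat.cast_add_of_ne_zero (hden a) (hden b), ?_, ?_⟩
  · intro b
    obtain ⟨m, rfl⟩ := ZMod.intCast_surjective b
    refine ⟨⟨(m : ℚ), ?_⟩, ?_⟩
    · show ¬ p ∣ ((m : ℚ)).den
      rw [Rat.den_intCast, Nat.dvd_one]
      exact hp.ne_one
    · exact Rat.cast_intCast m
  · intro a
    constructor
    · intro ha
      have ha' : ((a : ℚ) : ZMod p) = 0 := ha
      rw [Rat.cast_def, div_eq_zero_iff, or_iff_left (hden a),
        ZMod.intCast_zmod_eq_zero_iff_dvd] at ha'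
      obtain ⟨c, hc⟩ := ha'
      have hp0 : (p : ℚ) ≠ 0 := by exact_mod_cast hp.ne_zero
      have hac : (a : ℚ) = p * (c / (a : ℚ).den) := by
        conv_lhs => rw [← Rat.num_div_den (a : ℚ), hc]
        push_cast
        ring
      refine ⟨⟨(c : ℚ) / (a : ℚ).den, fun h => a.2 (h.trans ?_)⟩, Subtype.ext ?_⟩
      · have := Rat.den_dvd c (a : ℚ).den
        rw [Rat.divInt_eq_div] at this
        exact_mod_cast this
      · show p • ((c : ℚ) / (a : ℚ).den) = a
        rw [nsmul_eq_mul, ← hac]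
    · rintro ⟨b, rfl⟩
      rw [nsmulAddMonoidHom_apply, map_nsmul]
      simp

/-- The projection `ℚ → ℤ(p^∞)` with kernel `ℤ_(p)`. -/
lemma exists_rat_to_prufer (hp : p.Prime) :
    ∃ q : ℚ →+ Prufer p, Surjective q ∧ Exact (ZLocalAt p hp).subtype q := by
  have hle : AddSubgroup.zmultiples (1 : ℚ) ≤ ZLocalAt p hp := by
    rw [AddSubgroup.zmultiples_le]
    show ¬ p ∣ (1 : ℚ).den
    rw [Rat.den_one, Nat.dvd_one]
    exact hp.ne_one
  let g : (Prufer p) →+ ℚ ⧸ ZLocalAt p hp :=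
    (QuotientAddGroup.map _ _ (AddMonoidHom.id ℚ) hle).comp (Prufer p).subtype
  have hg : Bijective g := by
    constructor
    · rw [injective_iff_map_eq_zero]
      intro a ha
      obtain ⟨r, hr, rfl⟩ := Prufer.exists_rep a
      have hr' : ¬ p ∣ r.den := (QuotientAddGroup.eq_zero_iff (N := ZLocalAt p hp) r).1 ha
      obtain ⟨k, m, hm⟩ := (Prufer.mk_mem_iff p).1 hr
      have hdvd : r.den ∣ p ^ k := by
        have : r = (m : ℚ) / ((p ^ k : ℕ) : ℤ) := by
          have : ((p : ℚ) ^ k) ≠ 0 := pow_ne_zero _ (by exact_mod_cast hp.ne_zero)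
          push_cast
          rw [eq_div_iff this, mul_comm, hm]
        have h2 := Rat.den_dvd m (p ^ k : ℕ)
        rw [Rat.divInt_eq_div, ← this] at h2
        exact_mod_cast h2
      have hone : r.den = 1 :=
        (((hp.coprime_iff_not_dvd.2 hr').pow_left k).symm).eq_one_of_dvd hdvd
      refine Subtype.ext ((QuotientAddGroup.eq_zero_iff r).2
        (AddSubgroup.mem_zmultiples_iff.2 ⟨r.num, ?_⟩))
      rw [zsmul_eq_mul, mul_one]
      exact Rat.coe_int_num_of_den_eq_one hone
    · intro x
      obtain ⟨r, rfl⟩ := QuotientAddGroup.mk_surjective x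
      obtain ⟨k, m, hpm, hd⟩ := Nat.exists_eq_pow_mul_and_not_dvd r.den_nz p hp.ne_one
      have hcop : IsCoprime ((p ^ k : ℕ) : ℤ) (m : ℤ) :=
        Nat.isCoprime_iff_coprime.2 ((hp.coprime_iff_not_dvd.2 hpm).pow_left k)
      obtain ⟨u, v, huv⟩ := hcop
      have hpk : ((p : ℚ) ^ k) ≠ 0 := pow_ne_zero _ (by exact_mod_cast hp.ne_zero)
      have hm0 : (m : ℚ) ≠ 0 := by
        rintro h
        exact hpm (by rw [Nat.cast_eq_zero.1 h]; exact dvd_zero p)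
      have huvQ : (u : ℚ) * p ^ k + v * m = 1 := by exact_mod_cast huv
      obtain ⟨a, ha⟩ : ∃ a : ℤ, r = a / (p ^ k * m) := ⟨r.num, by
        conv_lhs => rw [← Rat.num_div_den r, hd]
        push_cast
        rfl⟩
      refine ⟨⟨((a * v / p ^ k : ℚ) : ℚ ⧸ _), (Prufer.mk_mem_iff p).2
        ⟨k, a * v, ?_⟩⟩, ?_⟩
      · push_cast; field_simp
      · refine (QuotientAddGroup.eq (s := ZLocalAt p hp)).2 ?_
        have hdiff : -(a * v / p ^ k : ℚ) + r = ((a * u : ℤ) : ℚ) / ((m : ℕ) : ℤ) := by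
          conv_lhs => rw [ha]
          push_cast
          field_simp
          linear_combination -(a : ℚ) * huvQ
        show ¬ p ∣ (-(a * v / p ^ k : ℚ) + r).den
        intro h
        rw [hdiff, ← Rat.divInt_eq_div] at h
        have h2 := (Int.natCast_dvd_natCast.2 h).trans (Rat.den_dvd (a * u) (m : ℕ))
        exact hpm (Int.natCast_dvd_natCast.1 h2)
  let e := AddEquiv.ofBijective g hg
  refine ⟨e.symm.toAddMonoidHom.comp (QuotientAddGroup.mk' (ZLocalAt p hp)),
    e.symm.surjective.comp (QuotientAddGroup.mk'_surjective _), fun r => ?_⟩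
  show e.symm (r : ℚ ⧸ ZLocalAt p hp) = 0 ↔ _
  rw [map_eq_zero_iff e.symm e.symm.injective, QuotientAddGroup.eq_zero_iff]
  simp

end Coefficients

namespace AS

variable {K : Type*} [TopologicalSpace K] [CompactSpace K] [T2Space K] {p : ℕ}

lemma vanish_prufer_of_zmod (hp : p.Prime) {n : ℕ} (h : Vanish (ZMod p) K n) :
    Vanish (Prufer p) K n := by
  obtain ⟨i, hi, hex⟩ := exists_zmod_to_prufer hp
  intro φ hφ
  obtain ⟨k, hk⟩ := exists_smul_isBd (Prufer.exists_smul_eq_zero p) hφ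
  induction k generalizing φ with
  | zero => simpa using hk
  | succ k ih =>
    refine h.isBd_of_push hi hex (Prufer.mulBy_surjective hp) hφ (ih _ (hφ.push _) ?_)
    rw [pow_succ, mul_smul] at hk
    exact hk

lemma vanish_rat_of_zlocal (hp : p.Prime) {n : ℕ} (h : Vanish (ZLocalAt p hp) K n) :
    Vanish ℚ K n := by
  obtain ⟨q, hq, hex⟩ := exists_rat_to_prufer hp
  intro φ hφ
  obtain ⟨k, hk⟩ := exists_smul_isBd (Prufer.exists_smul_eq_zero p) (hφ.push q)
  have hpush : p ^ k • push q φ = push q (push (mulBy ℚ (p ^ k)) φ) :=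
    funext fun s => (map_nsmul q (p ^ k) (φ s)).symm
  rw [hpush] at hk
  have hbd := (h.isBd_of_push (AddSubgroup.subtype_injective _) hex hq (hφ.push _) hk).push
    (AddMonoidHom.mulLeft ((p : ℚ) ^ k)⁻¹)
  convert hbd
  funext s
  have hpk : ((p : ℚ) ^ k) ≠ 0 := pow_ne_zero _ (by exact_mod_cast hp.ne_zero)
  simp [push, hpk]

end AS

/-! ### Comparison of dimensions -/

lemma cohDim_le {A : Type} [AddCommGroup A] {X : Type} [MetricSpace X] {c : ℕ∞}
    (h : ∀ (K : Type) [TopologicalSpace K] [CompactSpace K] [T2Space K],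
      (∀ (A' : Type) [AddCommGroup A'] (m : ℕ), ¬ AS.Vanish A' K m → (m : ℕ∞) ≤ cohDim A' X) →
      ∀ n : ℕ, ¬ AS.Vanish A K n → (n : ℕ∞) ≤ c) :
    cohDim A X ≤ c := by
  refine sSup_le ?_
  rintro _ ⟨n, rfl, B, hB, hn⟩
  obtain ⟨K, _, _, _, hK⟩ := AS.exists_compact_model B
  exact h K (fun A' _ m hm => le_sSup ⟨m, rfl, B, hB, (hK A' m).2 hm⟩) n ((hK A n).1 hn)

/-- **Proposition 7** (Bockstein's inequalities).  For any locally compact metric space `X`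
and prime `p`:
(1) `dim_{ℤ(p^∞)} X ≤ dim_{ℤ/p} X`;  (2) `dim_{ℤ/p} X ≤ dim_{ℤ(p^∞)} X + 1`;
(3) `dim_ℚ X ≤ dim_{ℤ_(p)} X`;  (4) `dim_{ℤ/p} X ≤ dim_{ℤ_(p)} X`;
(5) `dim_{ℤ(p^∞)} X ≤ max (dim_ℚ X) (dim_{ℤ_(p)} X - 1)`;
(6) `dim_{ℤ_(p)} X ≤ max (dim_ℚ X) (dim_{ℤ(p^∞)} X + 1)`. -/
theorem bockstein_inequalities (p : ℕ) (hp : p.Prime)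
    (X : Type) [MetricSpace X] [LocallyCompactSpace X] :
    cohDim ↥(Prufer p) X ≤ cohDim (ZMod p) X ∧
    cohDim (ZMod p) X ≤ cohDim ↥(Prufer p) X + 1 ∧
    cohDim ℚ X ≤ cohDim ↥(ZLocalAt p hp) X ∧
    cohDim (ZMod p) X ≤ cohDim ↥(ZLocalAt p hp) X ∧
    cohDim ↥(Prufer p) X ≤ max (cohDim ℚ X) (cohDim ↥(ZLocalAt p hp) X - 1) ∧
    cohDim ↥(ZLocalAt p hp) X ≤ max (cohDim ℚ X) (cohDim ↥(Prufer p) X + 1) := by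
  obtain ⟨i, hi, hiex⟩ := exists_zmod_to_prufer hp
  obtain ⟨q, hq, hqex⟩ := exists_zlocal_to_zmod hp
  obtain ⟨r, hr, hrex⟩ := exists_rat_to_prufer hp
  have hsub : Injective (ZLocalAt p hp).subtype := AddSubgroup.subtype_injective _
  refine ⟨cohDim_le ?_, cohDim_le ?_, cohDim_le ?_, cohDim_le ?_, cohDim_le ?_, cohDim_le ?_⟩
  · intro K _ _ _ hK n hn
    exact hK _ n fun h => hn (AS.vanish_prufer_of_zmod hp h)
  · rintro K _ _ _ hK (_ | n) hn
    · simp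
    · by_cases hP : AS.Vanish (Prufer p) K n
      · exact (hK _ (n + 1) fun h =>
          hn (hP.left hi hiex (Prufer.mulBy_surjective hp) h)).trans le_self_add
      · push_cast
        gcongr
        exact hK _ n hP
  · intro K _ _ _ hK n hn
    exact hK _ n fun h => hn (AS.vanish_rat_of_zlocal hp h)
  · intro K _ _ _ hK n hn
    by_cases hZ : AS.Vanish (ZLocalAt p hp) K n
    · refine le_trans ?_ (hK _ (n + 1) fun h =>
        hn (hZ.right (ZLocalAt.mulBy_injective hp) hqex hq h))
      exact_mod_cast n.le_succ
    · exact hK _ n hZ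
  · intro K _ _ _ hK n hn
    by_cases hQ : AS.Vanish ℚ K n
    · have := hK _ (n + 1) fun h => hn (hQ.right hsub hrex hr h)
      refine le_max_of_le_right (le_trans ?_ (tsub_le_tsub_right this 1))
      exact_mod_cast (Nat.add_sub_cancel (n := n) (m := 1)).ge
    · exact le_max_of_le_left (hK _ n hQ)
  · rintro K _ _ _ hK (_ | n) hn
    · simp
    · by_cases hP : AS.Vanish (Prufer p) K n
      · exact le_max_of_le_left (hK _ (n + 1) fun h => hn (hP.left hsub hrex hr h))
      · refine le_max_of_le_right ?_
        push_cast
        gcongr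
        exact hK _ n hP
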